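/- Let α, β, γ be permutations of {1,...,8} such that α and β are 8-cycles (cycle type {8}) and γ is a product of four disjoint 2-cycles (cycle type {2,2,2,2}). Then the number of Latin squares of order 8 having Θ = (α,β,γ) as an autotopism is 3456. -/

import Mathlib

/-- A Latin square of order `n`: each row and each column is a bijection. -/
def IsLatinSquare {n : ℕ} (L : Fin n → Fin n → Fin n) : Prop :=
  (∀ i, Function.Bijective (L i)) ∧ (∀ j, Function.Bijective fun i => L i j)

/-- `(α, β, γ)` is an autotopism of the Latin square `L`. -/
def IsAutotopism {n : ℕ} (α β γ : Equiv.Perm (Fin n)) (L : Fin n → Fin n → Fin n) : Prop :=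
  ∀ i j, L (α i) (β j) = γ (L i j)

/-!
After conjugating, `α` and `β` are both the rotation `i ↦ i + 1` of `Fin n`, where `n = 2 * m`. A
square with autotopism `(α, β, γ)` is then determined by its first row `f`, through
`L i j = γ ^ i (f (j - i))`. Its rows are bijective exactly when `f` is, and its columns are
bijective exactly when `d ↦ γ ^ (-d) (f d)` is. As `γ` is an involution, the latter map is `γ ∘ f`
on the odd indices and `f` on the even ones, so it is bijective exactly when `γ` preserves the
set `f(odds)` of size `m`. Every `γ`-invariant `m`-set arises from `m! * m!` permutations `f`, and
such a set is a union of `m / 2` of the `m` orbits of `γ`.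
-/

open Equiv Finset Function
open scoped Nat Pointwise

section Isotopism

variable {n : ℕ}

/-- The action of the isotopism `(σ, τ, ρ)` on squares: permute the rows by `σ`, the columns by `τ`
and the symbols by `ρ`. -/
def isotope (σ τ ρ : Perm (Fin n)) : (Fin n → Fin n → Fin n) ≃ (Fin n → Fin n → Fin n) :=
  σ.arrowCongr (τ.arrowCongr ρ)

theorem isotope_apply (σ τ ρ : Perm (Fin n)) (L : Fin n → Fin n → Fin n) (i j : Fin n) :
    isotope σ τ ρ L i j = ρ (L (σ.symm i) (τ.symm j)) := rfl

theorem isLatinSquare_isotope_iff (σ τ ρ : Perm (Fin n)) (L : Fin n → Fin n → Fin n) :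
    IsLatinSquare (isotope σ τ ρ L) ↔ IsLatinSquare L := by
  have row (i : Fin n) : Bijective (isotope σ τ ρ L i) ↔ Bijective (L (σ.symm i)) :=
    (ρ.comp_bijective _).trans (τ.symm.bijective_comp _)
  have column (j : Fin n) :
      Bijective (fun i => isotope σ τ ρ L i j) ↔ Bijective fun i => L i (τ.symm j) :=
    (ρ.comp_bijective _).trans (σ.symm.bijective_comp fun i => L i (τ.symm j))
  exact and_congr
    ((forall_congr' row).trans (σ.symm.forall_congr_right (q := fun i => Bijective (L i))))
    ((forall_congr' column).trans
      (τ.symm.forall_congr_right (q := fun j => Bijective fun i => L i j)))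

theorem isAutotopism_isotope_iff (σ τ ρ α β γ : Perm (Fin n)) (L : Fin n → Fin n → Fin n) :
    IsAutotopism (σ * α * σ⁻¹) (τ * β * τ⁻¹) (ρ * γ * ρ⁻¹) (isotope σ τ ρ L) ↔
      IsAutotopism α β γ L := by
  simp only [IsAutotopism, isotope_apply]
  exact σ.forall_congr_right.symm.trans <| forall_congr' fun i =>
    τ.forall_congr_right.symm.trans (by simp)

/-- The Latin squares of order `n` that have `(α, β, γ)` as an autotopism. -/
abbrev AutotopicLatinSquare (α β γ : Perm (Fin n)) : Type :=
  {L : Fin n → Fin n → Fin n // IsLatinSquare L ∧ IsAutotopism α β γ L}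

theorem card_autotopicLatinSquare_congr {α β γ α' β' γ' : Perm (Fin n)}
    (hα : IsConj α α') (hβ : IsConj β β') (hγ : IsConj γ γ') :
    Nat.card (AutotopicLatinSquare α β γ) = Nat.card (AutotopicLatinSquare α' β' γ') := by
  obtain ⟨σ, rfl⟩ := isConj_iff.1 hα
  obtain ⟨τ, rfl⟩ := isConj_iff.1 hβ
  obtain ⟨ρ, rfl⟩ := isConj_iff.1 hγ
  exact Nat.card_congr <| (isotope σ τ ρ).subtypeEquiv fun L =>
    ((isLatinSquare_isotope_iff σ τ ρ L).and (isAutotopism_isotope_iff σ τ ρ α β γ L)).symm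

theorem IsAutotopism.pow {α β γ : Perm (Fin n)} {L : Fin n → Fin n → Fin n}
    (h : IsAutotopism α β γ L) (k : ℕ) : IsAutotopism (α ^ k) (β ^ k) (γ ^ k) L := by
  induction k with
  | zero => exact fun _ _ => rfl
  | succ k ih => exact fun i j => by simp only [pow_succ', Perm.mul_apply, h _ _, ih _ _]

end Isotopism

section CyclicDevelopment

variable {n : ℕ} {γ : Perm (Fin n)}

/-- The square with first row `f` in which a step down and to the right, modulo `n`, applies `γ` to
the symbol (provided that `γ ^ n = 1`). -/
def cyclicDevelopment (γ : Perm (Fin n)) (f : Fin n → Fin n) : Fin n → Fin n → Fin n :=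
  fun i j => (γ ^ i.val) (f (j - i))

theorem pow_val_add {G : Type*} [Monoid G] {g : G} (hg : g ^ n = 1) (i j : Fin n) :
    g ^ (i + j).val = g ^ i.val * g ^ j.val := by
  rw [Fin.val_add, ← pow_eq_pow_mod _ hg, pow_add]

theorem finRotate_pow_val_apply (k i : Fin n) : (finRotate n ^ k.val) i = i + k := by
  rw [← Perm.iterate_eq_pow, ← finCycle_eq_finRotate_iterate, finCycle_apply]

variable [NeZero n]

theorem cyclicDevelopment_zero (f : Fin n → Fin n) : cyclicDevelopment γ f 0 = f := by
  ext j
  simp [cyclicDevelopment]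

theorem isAutotopism_cyclicDevelopment (hγ : γ ^ n = 1) (f : Fin n → Fin n) :
    IsAutotopism (finRotate n) (finRotate n) γ (cyclicDevelopment γ f) := by
  intro i j
  have step : γ ^ (i + 1).val = γ * γ ^ i.val := by
    rw [add_comm, pow_val_add hγ, Fin.val_one', ← pow_eq_pow_mod 1 hγ, pow_one]
  rw [finRotate_apply, finRotate_apply, cyclicDevelopment, cyclicDevelopment, step, Perm.mul_apply,
    add_sub_add_right_eq_sub]

theorem IsAutotopism.eq_cyclicDevelopment {L : Fin n → Fin n → Fin n}
    (h : IsAutotopism (finRotate n) (finRotate n) γ L) : L = cyclicDevelopment γ (L 0) := by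
  ext i j
  have pow_apply := h.pow i.val 0 (j - i)
  rw [finRotate_pow_val_apply, finRotate_pow_val_apply, zero_add, sub_add_cancel] at pow_apply
  rw [cyclicDevelopment, pow_apply]

theorem isLatinSquare_cyclicDevelopment_iff (hγ : γ ^ n = 1) (f : Fin n → Fin n) :
    IsLatinSquare (cyclicDevelopment γ f) ↔
      Bijective f ∧ Bijective fun d : Fin n => (γ ^ d.val)⁻¹ (f d) := by
  have row (i : Fin n) : Bijective (cyclicDevelopment γ f i) ↔ Bijective f :=
    ((γ ^ i.val).comp_bijective _).trans ((Equiv.subRight i).bijective_comp f)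
  have column (j : Fin n) : Bijective (fun i => cyclicDevelopment γ f i j) ↔
      Bijective fun d : Fin n => (γ ^ d.val)⁻¹ (f d) := by
    have pow_eq (i : Fin n) : γ ^ i.val = γ ^ j.val * (γ ^ (j - i).val)⁻¹ := by
      rw [eq_mul_inv_iff_mul_eq, ← pow_val_add hγ, add_sub_cancel]
    have eq_comp : (fun i => cyclicDevelopment γ f i j) =
        (γ ^ j.val : Perm (Fin n)) ∘ (fun d : Fin n => (γ ^ d.val)⁻¹ (f d)) ∘ Equiv.subLeft j := by
      ext i
      rw [cyclicDevelopment, pow_eq]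
      rfl
    rw [eq_comp, Equiv.comp_bijective, Equiv.bijective_comp]
  simp only [IsLatinSquare, row, column, forall_const]

theorem card_autotopicLatinSquare_finRotate (hγ : γ ^ n = 1) :
    Nat.card (AutotopicLatinSquare (finRotate n) (finRotate n) γ) =
      Nat.card {f : Perm (Fin n) // Bijective fun d : Fin n => (γ ^ d.val)⁻¹ (f d)} := by
  symm
  refine Nat.card_congr
    { toFun := fun f => ⟨cyclicDevelopment γ f,
        (isLatinSquare_cyclicDevelopment_iff hγ f).2 ⟨f.1.bijective, f.2⟩,
        isAutotopism_cyclicDevelopment hγ f⟩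
      invFun := fun L => ⟨Equiv.ofBijective (L.1 0) (L.2.1.1 0), ?_⟩
      left_inv := fun f => ?_
      right_inv := fun L => Subtype.ext L.2.2.eq_cyclicDevelopment.symm }
  · have latin := L.2.1
    rw [L.2.2.eq_cyclicDevelopment, isLatinSquare_cyclicDevelopment_iff hγ] at latin
    exact latin.2
  · ext d
    simp [cyclicDevelopment_zero]

end CyclicDevelopment

section Involution

theorem bijective_piecewise_comp_iff {ι X : Type*} (f : ι ≃ X) (g : Perm X) (O : Set ι)
    [DecidablePred (· ∈ O)] :
    Bijective (O.piecewise (g ∘ f) f) ↔ g '' (f '' O) = f '' O := by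
  have injective_iff : Injective (O.piecewise (g ∘ f) f) ↔ g '' (f '' O) ⊆ f '' O := by
    simp only [Set.injective_piecewise_iff, (g.injective.comp f.injective).injOn, f.injective.injOn,
      true_and, Set.image_subset_iff]
    refine forall₂_congr fun x _ => ⟨fun h => ?_, fun h y hy hxy => ?_⟩
    · by_contra hx
      exact h (f.symm (g (f x))) (fun hy => hx ⟨_, hy, by simp⟩) (by simp)
    · obtain ⟨z, hz, hzx⟩ := h
      exact hy (f.injective (hzx.trans hxy) ▸ hz)
  have surjective_iff : Surjective (O.piecewise (g ∘ f) f) ↔ f '' O ⊆ g '' (f '' O) := by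
    rw [← Set.range_eq_univ, Set.range_piecewise, Set.image_comp, Set.image_compl_eq f.bijective,
      Set.union_comm, ← Set.compl_subset_iff_union, compl_compl]
  rw [Bijective, injective_iff, surjective_iff, Set.Subset.antisymm_iff]

/-- The odd elements of `Fin n`: the indices `d` at which `γ ^ (-d)` is `γ` rather than the
identity, when `γ` is an involution. -/
def oddIndices (n : ℕ) : Finset (Fin n) := {d | Odd d.val}

theorem card_oddIndices_two_mul (m : ℕ) : #(oddIndices (2 * m)) = m := by
  rw [oddIndices, card_filter, Fin.sum_univ_eq_sum_range (fun d => if Odd d then 1 else 0)]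
  induction m with
  | zero => rfl
  | succ m ih =>
    rw [mul_add_one, sum_range_succ, sum_range_succ, ih]
    simp

theorem bijective_pow_inv_comp_iff {n : ℕ} {γ : Perm (Fin n)} (hγ : γ ^ 2 = 1)
    (f : Perm (Fin n)) :
    (Bijective fun d : Fin n => (γ ^ d.val)⁻¹ (f d)) ↔
      γ • f • oddIndices n = f • oddIndices n := by
  have eq_piecewise : (fun d : Fin n => (γ ^ d.val)⁻¹ (f d)) =
      (oddIndices n : Set (Fin n)).piecewise (γ ∘ f) f := by
    ext d
    rcases Nat.even_or_odd d.val with hd | hd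
    · have notMem : d ∉ oddIndices n := by simpa [oddIndices] using hd
      have pow_eq : γ ^ d.val = 1 := orderOf_dvd_iff_pow_eq_one.1 <|
        (orderOf_dvd_of_pow_eq_one hγ).trans hd.two_dvd
      simp [notMem, pow_eq]
    · have mem : d ∈ oddIndices n := by simpa [oddIndices] using hd
      obtain ⟨k, hk⟩ := hd
      have pow_eq : (γ ^ d.val)⁻¹ = γ := by
        rw [hk, pow_succ, pow_mul, hγ, one_pow, one_mul, inv_eq_iff_mul_eq_one, ← sq, hγ]
      simp [mem, pow_eq]
  rw [eq_piecewise, bijective_piecewise_comp_iff, ← coe_inj, coe_smul_finset, coe_smul_finset]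
  rfl

end Involution

section Count

variable {X : Type*} [Fintype X] [DecidableEq X]

theorem card_perm_smul_finset_eq {O S : Finset X} (h : #O = #S) :
    #{f : Perm X | f • O = S} = (#O)! * (Fintype.card X - #O)! := by
  have transitive := Set.powersetCard.isPretransitive (α := X) (n := #S)
  obtain ⟨σ, hσ⟩ := MulAction.exists_smul_eq (Perm X)
    (⟨O, h⟩ : Set.powersetCard X #S) ⟨S, rfl⟩
  replace hσ : σ • O = S := congrArg Subtype.val hσ
  have translate : #{f : Perm X | f • O = S} = #{f : Perm X | f • O = O} := by
    refine (card_equiv (Equiv.mulLeft σ) fun f => ?_).symm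
    simp [← hσ, mul_smul]
  have smul_eq_iff (f : Perm X) :
      f • O = O ↔ (fun x => decide (x ∈ O)) ∘ f = fun x => decide (x ∈ O) := by
    rw [eq_comm, Finset.ext_iff, funext_iff, ← f.forall_congr_right]
    simp [← Perm.smul_def]
  rw [translate]
  simp only [smul_eq_iff]
  rw [← Fintype.card_subtype, DomMulAct.stabilizer_card, Fintype.prod_bool]
  simp [Fintype.card_subtype_compl]

theorem card_perm_filter_smul_finset (P : Finset X → Prop) [DecidablePred P] (O : Finset X) :
    #{f : Perm X | P (f • O)} =
      #{S ∈ powersetCard #O univ | P S} * ((#O)! * (Fintype.card X - #O)!) := by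
  rw [card_eq_sum_card_fiberwise (f := (· • O)) (t := {S ∈ powersetCard #O univ | P S})
    fun f hf => by simpa using hf]
  refine sum_const_nat fun S hS => ?_
  obtain ⟨hcard, hP⟩ : #S = #O ∧ P S := by simpa using hS
  rw [← card_perm_smul_finset_eq hcard.symm, filter_filter]
  congr! 2 with f
  simp +contextual [hP]

end Count

section InvariantFinsets

variable {X : Type*}

/-- The orbit of `x` under an involution `g`, as an unordered pair. -/
def orbitPair (g : Perm X) (x : X) : Sym2 X := s(x, g x)

variable {g : Perm X}

theorem orbitPair_eq_iff (hg : Involutive g) {x y : X} :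
    orbitPair g x = orbitPair g y ↔ x = y ∨ x = g y := by
  rw [orbitPair, orbitPair, Sym2.eq_iff]
  grind [hg x, hg y]

theorem orbitPair_apply (hg : Involutive g) (x : X) : orbitPair g (g x) = orbitPair g x :=
  (orbitPair_eq_iff hg).2 (Or.inr rfl)

variable [DecidableEq X]

theorem apply_mem_of_smul_eq {S : Finset X} (hS : g • S = S) {x : X} (hx : x ∈ S) : g x ∈ S :=
  hS ▸ smul_mem_smul_finset hx

theorem card_image_orbitPair_mul_two (hg : Involutive g) (hfix : ∀ x, g x ≠ x) {S : Finset X}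
    (hS : g • S = S) : #(S.image (orbitPair g)) * 2 = #S := by
  rw [card_eq_sum_card_image (orbitPair g) S]
  refine (sum_const_nat fun p hp => ?_).symm
  obtain ⟨x, hx, rfl⟩ := mem_image.1 hp
  have fiber_eq : {y ∈ S | orbitPair g y = orbitPair g x} = {x, g x} := by
    ext y
    simp only [mem_filter, orbitPair_eq_iff hg, mem_insert, mem_singleton, and_iff_right_iff_imp]
    rintro (rfl | rfl)
    exacts [hx, apply_mem_of_smul_eq hS hx]
  rw [fiber_eq, card_pair (hfix x).symm]

variable [Fintype X]

theorem smul_filter_orbitPair_mem (hg : Involutive g) (T : Finset (Sym2 X)) :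
    g • ({x | orbitPair g x ∈ T} : Finset X) = ({x | orbitPair g x ∈ T} : Finset X) := by
  ext x
  rw [← inv_smul_mem_iff, mem_filter_univ, mem_filter_univ, ← orbitPair_apply hg, ← Perm.smul_def,
    smul_inv_smul]

theorem filter_orbitPair_mem_image (hg : Involutive g) {S : Finset X} (hS : g • S = S) :
    ({x | orbitPair g x ∈ S.image (orbitPair g)} : Finset X) = S := by
  ext x
  simp only [mem_filter_univ, mem_image, orbitPair_eq_iff hg]
  refine ⟨?_, fun hx => ⟨x, hx, Or.inl rfl⟩⟩
  rintro ⟨y, hy, rfl | rfl⟩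
  · exact hy
  · simpa only [hg x] using apply_mem_of_smul_eq hS hy

theorem image_filter_orbitPair_mem {T : Finset (Sym2 X)} (hT : T ⊆ univ.image (orbitPair g)) :
    ({x | orbitPair g x ∈ T} : Finset X).image (orbitPair g) = T := by
  rw [← filter_image (p := (· ∈ T)), filter_mem_eq_inter, inter_eq_right.2 hT]

theorem powersetCard_filter_smul_eq_of_odd (hg : Involutive g) (hfix : ∀ x, g x ≠ x) {k : ℕ}
    (hk : Odd k) : {S ∈ powersetCard k (univ : Finset X) | g • S = S} = ∅ := by
  refine filter_eq_empty_iff.2 fun S hS hgS => ?_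
  have card_eq := card_image_orbitPair_mul_two hg hfix hgS
  rw [(mem_powersetCard.1 hS).2] at card_eq
  exact Nat.not_even_iff_odd.2 hk (card_eq ▸ even_two.mul_left _)

theorem card_powersetCard_filter_smul_eq (hg : Involutive g) (hfix : ∀ x, g x ≠ x) (k : ℕ) :
    #{S ∈ powersetCard (2 * k) (univ : Finset X) | g • S = S} = (Fintype.card X / 2).choose k := by
  have card_orbits : #(univ.image (orbitPair g)) = Fintype.card X / 2 := by
    rw [← card_univ, ← card_image_orbitPair_mul_two hg hfix smul_finset_univ,
      Nat.mul_div_cancel _ two_pos]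
  rw [← card_orbits, ← card_powersetCard]
  refine card_nbij' (·.image (orbitPair g)) (fun T => ({x | orbitPair g x ∈ T} : Finset X))
    (fun S hS => ?_) (fun T hT => ?_) (fun S hS => ?_) (fun T hT => ?_)
  · obtain ⟨hcard, hgS⟩ : #S = 2 * k ∧ g • S = S := by simpa using hS
    have card_image := card_image_orbitPair_mul_two hg hfix hgS
    exact mem_powersetCard.2 ⟨image_subset_image (subset_univ S), by lia⟩
  · obtain ⟨hT, hcard⟩ := mem_powersetCard.1 hT
    refine mem_filter.2 ⟨mem_powersetCard_univ.2 ?_, smul_filter_orbitPair_mem hg T⟩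
    rw [← card_image_orbitPair_mul_two hg hfix (smul_filter_orbitPair_mem hg T),
      image_filter_orbitPair_mem hT, hcard, mul_comm]
  · exact filter_orbitPair_mem_image hg (mem_filter.1 hS).2
  · exact image_filter_orbitPair_mem (mem_powersetCard.1 hT).1

end InvariantFinsets

section CycleType

variable {X : Type*} [Fintype X] [DecidableEq X] {g : Perm X} {m : ℕ}

theorem sq_eq_one_of_cycleType_eq_replicate (hg : g.cycleType = Multiset.replicate m 2) :
    g ^ 2 = 1 :=
  Perm.pow_prime_eq_one_iff.2 fun _ hc => Multiset.eq_of_mem_replicate (hg ▸ hc)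

theorem apply_ne_of_cycleType_eq_replicate (hg : g.cycleType = Multiset.replicate m 2)
    (hX : Fintype.card X = 2 * m) (x : X) : g x ≠ x := by
  have card_support : #g.support = Fintype.card X := by
    rw [← Perm.sum_cycleType, hg, Multiset.sum_replicate, hX, smul_eq_mul, mul_comm]
  exact Perm.mem_support.1 (eq_univ_of_card _ card_support ▸ mem_univ x)

end CycleType

theorem isConj_finRotate {n : ℕ} {α : Perm (Fin n)} (hα : α.cycleType = {n}) :
    IsConj α (finRotate n) := by
  have two_le : 2 ≤ n := Perm.two_le_of_mem_cycleType (hα ▸ Multiset.mem_singleton_self n)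
  exact Perm.isConj_iff_cycleType_eq.2 (hα.trans (cycleType_finRotate_of_le two_le).symm)

theorem card_autotopicLatinSquare_finRotate_of_sq_eq_one {m : ℕ} [NeZero m]
    {γ : Perm (Fin (2 * m))} (hγ : γ ^ 2 = 1) :
    Nat.card (AutotopicLatinSquare (finRotate (2 * m)) (finRotate (2 * m)) γ) =
      #{S ∈ powersetCard m (univ : Finset (Fin (2 * m))) | γ • S = S} * m ! ^ 2 := by
  rw [card_autotopicLatinSquare_finRotate (by rw [pow_mul, hγ, one_pow])]
  simp only [bijective_pow_inv_comp_iff hγ]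
  rw [Nat.card_eq_fintype_card, Fintype.card_subtype]
  refine (card_perm_filter_smul_finset (fun S => γ • S = S) (oddIndices (2 * m))).trans ?_
  rw [card_oddIndices_two_mul, Fintype.card_fin, show 2 * m - m = m by lia, sq]

theorem delta_88_2222_general {m : ℕ} (α β γ : Perm (Fin (2 * m))) (hα : α.cycleType = {2 * m})
    (hβ : β.cycleType = {2 * m}) (hγ : γ.cycleType = Multiset.replicate m 2) :
    Nat.card {L : Fin (2 * m) → Fin (2 * m) → Fin (2 * m) //
      IsLatinSquare L ∧ IsAutotopism α β γ L} =
      if Even m then m.choose (m / 2) * m ! ^ 2 else 0 := by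
  have two_le : 2 ≤ 2 * m := Perm.two_le_of_mem_cycleType (hα ▸ Multiset.mem_singleton_self _)
  have : NeZero m := ⟨by omega⟩
  have hsq : γ ^ 2 = 1 := sq_eq_one_of_cycleType_eq_replicate hγ
  have involutive : Involutive γ := fun x => by rw [← Perm.mul_apply, ← sq, hsq, Perm.one_apply]
  have hfix := apply_ne_of_cycleType_eq_replicate hγ (Fintype.card_fin _)
  rw [card_autotopicLatinSquare_congr (isConj_finRotate hα) (isConj_finRotate hβ) (IsConj.refl γ),
    card_autotopicLatinSquare_finRotate_of_sq_eq_one hsq]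
  split_ifs with hm
  · have card_invariant := card_powersetCard_filter_smul_eq involutive hfix (m / 2)
    rw [Nat.two_mul_div_two_of_even hm, Fintype.card_fin, Nat.mul_div_cancel_left m two_pos]
      at card_invariant
    rw [card_invariant]
  · rw [powersetCard_filter_smul_eq_of_odd involutive hfix (Nat.not_even_iff_odd.1 hm), card_empty,
      zero_mul]

theorem delta_88_2222 (α β γ : Equiv.Perm (Fin 8))
    (hα : α.cycleType = {8}) (hβ : β.cycleType = {8}) (hγ : γ.cycleType = {2, 2, 2, 2}) :
    Nat.card {L : Fin 8 → Fin 8 → Fin 8 // IsLatinSquare L ∧ IsAutotopism α β γ L} =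
      3456 :=
  (delta_88_2222_general (m := 4) α β γ hα hβ hγ).trans (by decide)
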